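/- Let $F$ be a finite field with $q$ elements, let $t \geq 1$, let $k \leq t-1$, let $x_1, \dots, x_k$ be pairwise distinct nonzero elements of $F$, let $y_1, \dots, y_k$ be arbitrary elements of $F$, and let $D' \in F$ be any candidate secret. Then the number of polynomials $p \in F[X]$ of degree at most $t-1$ with constant term $p(0) = D'$ and $p(x_i) = y_i$ for all $i = 1, \dots, k$ is exactly $q^{t-1-k}$; in particular this number is the same for every candidate secret $D'$. -/

import Mathlib

/-- Perfect secrecy form of the paper's Theorem 1: over a finite field with `q`
elements, for any `k ≤ t-1` shares at pairwise distinct nonzero abscissae and any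
candidate secret `D'`, the number of polynomials of degree at most `t-1` with constant
term `D'` consistent with the shares is exactly `q^(t-1-k)`, independently of `D'`. -/
theorem shamir_perfect_secrecy_count {F : Type*} [Field F] [Fintype F]
    (t k : ℕ) (ht : 1 ≤ t) (hk : k ≤ t - 1)
    (x : Fin k → F) (hx : Function.Injective x) (hx0 : ∀ i, x i ≠ 0)
    (y : Fin k → F) (D' : F) :
    {p : Polynomial F |
        p.degree ≤ ((t - 1 : ℕ) : WithBot ℕ) ∧ p.eval 0 = D' ∧
          ∀ i, p.eval (x i) = y i}.ncard
      = Fintype.card F ^ (t - 1 - k) := by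
  classical
  obtain ⟨m, hm⟩ : ∃ m, t - 1 = k + m := ⟨t - 1 - k, by omega⟩
  have hm' : t - 1 - k = m := by omega
  rw [hm', hm]
  let v : Fin (k + 1) → F := Fin.cons 0 x
  let r : Fin (k + 1) → F := Fin.cons D' y
  have hv : Function.Injective v := by
    refine Fin.cons_injective_iff.2 ⟨?_, hx⟩
    rintro ⟨i, hi⟩
    exact hx0 i hi
  have hvs : Set.InjOn v (Finset.univ : Finset (Fin (k + 1))) := hv.injOn
  let N := Lagrange.nodal Finset.univ v
  let L := Lagrange.interpolate Finset.univ v r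
  have hN0 : N ≠ 0 := Lagrange.nodal_ne_zero
  have hNd : N.degree = ((k + 1 : ℕ) : WithBot ℕ) := by
    simp [N, Lagrange.degree_nodal]
  have hLd : L.degree < ((k + m + 1 : ℕ) : WithBot ℕ) := by
    have h := Lagrange.degree_interpolate_lt r hvs
    rw [Finset.card_univ, Fintype.card_fin] at h
    exact h.trans_le (by exact_mod_cast (by omega : k + 1 ≤ k + m + 1))
  have hLe : ∀ i, L.eval (v i) = r i := fun i =>
    Lagrange.eval_interpolate_at_node r hvs (Finset.mem_univ i)
  have hNe : ∀ i, N.eval (v i) = 0 := fun i =>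
    Lagrange.eval_nodal_at_node (Finset.mem_univ i)
  have hmul : ∀ g : Polynomial F,
      (N * g).degree < ((k + m + 1 : ℕ) : WithBot ℕ) ↔ g.degree < (m : WithBot ℕ) := by
    intro g
    by_cases hg : g = 0
    · simp [hg]
    · rw [Polynomial.degree_mul, hNd, Polynomial.degree_eq_natDegree hg]
      norm_cast
      omega
  have hset : {p : Polynomial F | p.degree ≤ ((k + m : ℕ) : WithBot ℕ) ∧ p.eval 0 = D' ∧
      ∀ i, p.eval (x i) = y i} =
      (fun g => L + N * g) '' (Polynomial.degreeLT F m : Set (Polynomial F)) := by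
    have hlt : ∀ p : Polynomial F, p.degree ≤ ((k + m : ℕ) : WithBot ℕ) ↔
        p.degree < ((k + m + 1 : ℕ) : WithBot ℕ) := by
      intro p
      rw [← Polynomial.mem_degreeLE, ← Polynomial.degreeLT_succ_eq_degreeLE,
        Polynomial.mem_degreeLT]
    have hev : ∀ p : Polynomial F, (p.eval 0 = D' ∧ ∀ i, p.eval (x i) = y i) ↔
        ∀ i, p.eval (v i) = r i := by
      intro p
      rw [Fin.forall_fin_succ]
      simp [v, r]
    ext p
    simp only [Set.mem_ofPred_eq, hlt, hev, Set.mem_image, SetLike.mem_coe,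
      Polynomial.mem_degreeLT]
    constructor
    · rintro ⟨hd, he⟩
      have hdvd : N ∣ p - L := by
        refine Finset.prod_dvd_of_coprime
          (fun i _ j _ hij => Polynomial.pairwise_coprime_X_sub_C hv hij) ?_
        intro i _
        rw [Polynomial.dvd_iff_isRoot, Polynomial.IsRoot.def, Polynomial.eval_sub, he, hLe,
          sub_self]
      obtain ⟨g, hg⟩ := hdvd
      refine ⟨g, (hmul g).1 ?_, by rw [← hg]; ring⟩
      rw [← hg]
      exact (Polynomial.degree_sub_le _ _).trans_lt (max_lt hd hLd)
    · rintro ⟨g, hg, rfl⟩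
      refine ⟨(Polynomial.degree_add_le _ _).trans_lt (max_lt hLd ((hmul g).2 hg)), ?_⟩
      intro i
      rw [Polynomial.eval_add, Polynomial.eval_mul, hNe, hLe, zero_mul, add_zero]
  rw [hset, Set.ncard_image_of_injective]
  · rw [← Nat.card_coe_set_eq]
    have := Nat.card_congr (Polynomial.degreeLTEquiv F m).toEquiv
    rw [Nat.card_eq_fintype_card (α := Fin m → F), Fintype.card_fun, Fintype.card_fin] at this
    exact this
  · intro a b hab
    exact mul_left_cancel₀ hN0 (add_left_cancel hab)
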